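/- Pointwise Dimension via Reference Subspace (Lemma). Fix integers p ≥ 1 and n ≥ 1, a radius R > 0, and an integer 1 ≤ r ≤ p. Let V̄ ⊆ ℝ^p be an r-dimensional subspace and let π_V̄ be the uniform probability measure on B₂(1.58R) ∩ V̄, i.e. the pushforward, under any linear isometry from ℝ^r onto V̄, of normalized Lebesgue measure on the Euclidean ball of radius 1.58R in ℝ^r. Then for every p×p positive semidefinite matrix G with eigenvalues λ_1 ≥ … ≥ λ_p (nonincreasing, with multiplicity), every w ∈ ℝ^p with ‖w‖₂ ≤ R, and every ε > 0 such that: (a) r = r_eff(G,R,ε), and (b) there exists an r-dimensional subspace V spanned by orthonormal eigenvectors of G corresponding to λ_1,…,λ_r with ‖G^{1/2}(P_V − P_V̄)‖_op ≤ √n·ε/(4R); one has log( 1 / π_V̄( { w' ∈ ℝ^p : (w'−w)ᵀ G (w'−w) ≤ n·ε² } ) ) ≤ (1/2) Σ_{k=1}^{r} log( 40·R²·λ_k / (n·ε²) ). -/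

import Mathlib

open MeasureTheory
open scoped ENNReal NNReal Matrix MatrixOrder

noncomputable section

/-- The pointwise dimension `log(1/p)` of a (probability) mass `p`, valued in `[0,∞]`,
with the convention `log(1/0) = ∞`. -/
def negLog (p : ℝ≥0∞) : ℝ≥0∞ :=
  if p = 0 then ⊤ else ENNReal.ofReal (Real.log (1 / p.toReal))

/-- The eigenvalues of a symmetric real matrix, listed in nonincreasing order with
multiplicity (junk value `0` if the matrix is not symmetric). -/
def eigDesc {m : ℕ} (G : Matrix (Fin m) (Fin m) ℝ) : Fin m → ℝ :=
  if h : G.IsHermitian then (fun k => (h.eigenvalues ∘ Tuple.sort h.eigenvalues) k.rev) else 0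

/-- Effective rank `r_eff(G,R,ε) = max{k : λ_k(G)·R² ≥ nε²/2}` (`0` if no such `k`). -/
def rEff {m : ℕ} (G : Matrix (Fin m) (Fin m) ℝ) (R : ℝ) (n : ℕ) (ε : ℝ) : ℕ :=
  (Finset.univ.filter fun k : Fin m => (n : ℝ) * ε ^ 2 / 2 ≤ eigDesc G k * R ^ 2).card

/-- The `ℓ² → ℓ²` operator norm of a real matrix. -/
def opNorm {m k : Type*} [Fintype m] [Fintype k] (M : Matrix m k ℝ) : ℝ :=
  sSup {t | ∃ x : k → ℝ, (∑ j, x j ^ 2) ≤ 1 ∧ t = Real.sqrt (∑ i, (M.mulVec x i) ^ 2)}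

/-- The (matrix of the) orthogonal projection determined by an orthonormal family
`u : Fin r → ℝ^p`, namely `Σ_k u_k u_kᵀ`. -/
def gramProj {p r : ℕ} (u : Fin r → Fin p → ℝ) : Matrix (Fin p) (Fin p) ℝ :=
  Matrix.of fun i j => ∑ k, u k i * u k j

/-- The uniform probability measure on `B₂(1.58 R) ∩ V̄`, where `V̄` is the span of the
orthonormal family `v`: the pushforward, under the induced linear isometry
`ℝ^r → ℝ^p`, of normalized Lebesgue measure on the Euclidean ball of radius `1.58 R`. -/
def refPrior (p r : ℕ) (R : ℝ) (v : Fin r → Fin p → ℝ) : Measure (Fin p → ℝ) :=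
  Measure.map (fun a : Fin r → ℝ => fun i => ∑ k, a k * v k i)
    ((volume {a : Fin r → ℝ | (∑ k, a k ^ 2) ≤ (1.58 * R) ^ 2})⁻¹ •
      volume.restrict {a : Fin r → ℝ | (∑ k, a k ^ 2) ≤ (1.58 * R) ^ 2})

/-!
Let the rows of `U` and `V` be orthonormal bases of the top eigenspace and of the reference
subspace, put `M = U Vᵀ` and `τ = n ε² / (2 R²)`, so that `λ_j ≥ τ` for `j ≤ r` and `G ≤ τ`
orthogonally to the rows of `U`. Since `G ≥ τ` along the rows of `U`, closeness of the projections
in `G^{1/2}`-norm shows that vectors orthogonal to the reference subspace have small components in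
the eigenspace. This bounds `V Uᵀ` from below, hence also its transpose: `‖M a‖² ≥ (7/8) ‖a‖²`.

Choose `c` with `M c = U w`, so that `Vᵀ c` and `w` have the same top eigencoordinates. If
`∑ λ_j (M z)_j² ≤ τ R² / 8`, then `c + z` stays in the ball of radius `1.58 R`, and `Vᵀ (c + z)`
lies in the sublevel set: its top eigencoordinates contribute at most `τ R² / 8` to the energy of
`Vᵀ (c + z) - w`, and Young's inequality bounds the contribution of the rest. This ellipsoid
contains the set of `z` that `L = diag (√(20 λ_j / τ)) M` maps into the ball, and the translate of
that set by `c` has prior mass `1 / |det L|`. As `|det M| ≤ 1`, the logarithm of `|det L|` is at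
most `(1/2) ∑ log (20 λ_j / τ)`, and `20 / τ = 40 R² / (n ε²)`.
-/

section DotProduct

variable {ι κ : Type*} [Fintype ι] [Fintype κ]

lemma dotProduct_self_nonneg (x : ι → ℝ) : 0 ≤ x ⬝ᵥ x := by
  simpa using dotProduct_star_self_nonneg x

lemma dotProduct_self_eq_sum_sq (x : ι → ℝ) : x ⬝ᵥ x = ∑ i, x i ^ 2 := by
  simp only [dotProduct, sq]

lemma dotProduct_self_eq_norm_sq (x : ι → ℝ) : x ⬝ᵥ x = ‖WithLp.toLp 2 x‖ ^ 2 := by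
  rw [EuclideanSpace.real_norm_sq_eq, dotProduct_self_eq_sum_sq]

lemma sq_dotProduct_le (x y : ι → ℝ) : (x ⬝ᵥ y) ^ 2 ≤ (x ⬝ᵥ x) * (y ⬝ᵥ y) := by
  rw [dotProduct_self_eq_sum_sq, dotProduct_self_eq_sum_sq]
  exact Finset.sum_mul_sq_le_sq_mul_sq Finset.univ x y

lemma dotProduct_self_le_of_eq_dotProduct {x : ι → ℝ} {b y : κ → ℝ} {θ : ℝ} (hθ : 0 ≤ θ)
    (hx : x ⬝ᵥ x = b ⬝ᵥ y) (hy : y ⬝ᵥ y ≤ θ * (x ⬝ᵥ x)) : x ⬝ᵥ x ≤ θ * (b ⬝ᵥ b) := by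
  have hb := dotProduct_self_nonneg b
  rcases (dotProduct_self_nonneg x).eq_or_lt with h0 | hpos
  · rw [← h0]; positivity
  refine le_of_mul_le_mul_right ?_ hpos
  calc (x ⬝ᵥ x) * (x ⬝ᵥ x) = (b ⬝ᵥ y) ^ 2 := by rw [← hx, sq]
    _ ≤ (b ⬝ᵥ b) * (y ⬝ᵥ y) := sq_dotProduct_le b y
    _ ≤ (b ⬝ᵥ b) * (θ * (x ⬝ᵥ x)) := by gcongr
    _ = θ * (b ⬝ᵥ b) * (x ⬝ᵥ x) := by ring

lemma mul_dotProduct_self_le_sum {lam : ι → ℝ} {τ : ℝ} (hlam : ∀ i, τ ≤ lam i) (b : ι → ℝ) :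
    τ * (b ⬝ᵥ b) ≤ ∑ i, lam i * b i ^ 2 := by
  rw [dotProduct_self_eq_sum_sq, Finset.mul_sum]
  gcongr with i
  exact hlam i

lemma add_dotProduct_mulVec_add_le {G : Matrix ι ι ℝ} (hG : G.PosSemidef) {s : ℝ} (hs : 0 < s)
    (x y : ι → ℝ) :
    (x + y) ⬝ᵥ (G *ᵥ (x + y)) ≤ (1 + s) * (x ⬝ᵥ (G *ᵥ x)) + (1 + s⁻¹) * (y ⬝ᵥ (G *ᵥ y)) := by
  have h : 0 ≤ s⁻¹ * ((s • x - y) ⬝ᵥ (G *ᵥ (s • x - y))) :=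
    mul_nonneg (by positivity) (by simpa using hG.dotProduct_mulVec_nonneg (s • x - y))
  have hexpand : s⁻¹ * ((s • x - y) ⬝ᵥ (G *ᵥ (s • x - y))) =
      s * (x ⬝ᵥ (G *ᵥ x)) - x ⬝ᵥ (G *ᵥ y) - y ⬝ᵥ (G *ᵥ x) + s⁻¹ * (y ⬝ᵥ (G *ᵥ y)) := by
    simp only [Matrix.mulVec_sub, Matrix.mulVec_smul, sub_dotProduct, dotProduct_sub,
      smul_dotProduct, dotProduct_smul, smul_eq_mul]
    field_simp
    ring
  simp only [Matrix.mulVec_add, add_dotProduct, dotProduct_add]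
  linarith

lemma add_dotProduct_add_le {s : ℝ} (hs : 0 < s) (x y : ι → ℝ) :
    (x + y) ⬝ᵥ (x + y) ≤ (1 + s) * (x ⬝ᵥ x) + (1 + s⁻¹) * (y ⬝ᵥ y) := by
  classical
  simpa using add_dotProduct_mulVec_add_le Matrix.PosSemidef.one hs x y

lemma isUnit_of_mul_dotProduct_self_le [DecidableEq ι] {N : Matrix ι ι ℝ} {c : ℝ} (hc : 0 < c)
    (hN : ∀ b, c * (b ⬝ᵥ b) ≤ (N *ᵥ b) ⬝ᵥ (N *ᵥ b)) : IsUnit N := by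
  refine Matrix.mulVec_injective_iff_isUnit.mp fun x y hxy => sub_eq_zero.mp ?_
  have h := hN (x - y)
  rw [Matrix.mulVec_sub, sub_eq_zero.mpr hxy, zero_dotProduct] at h
  exact dotProduct_self_eq_zero.mp
    (le_antisymm (nonpos_of_mul_nonpos_right h hc) (dotProduct_self_nonneg _))

lemma mul_dotProduct_self_le_transpose_mulVec {N : Matrix ι ι ℝ} {c : ℝ} (hc : 0 < c)
    (hN : ∀ b, c * (b ⬝ᵥ b) ≤ (N *ᵥ b) ⬝ᵥ (N *ᵥ b)) (a : ι → ℝ) :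
    c * (a ⬝ᵥ a) ≤ (Nᵀ *ᵥ a) ⬝ᵥ (Nᵀ *ᵥ a) := by
  classical
  obtain ⟨b, rfl⟩ :=
    Matrix.mulVec_surjective_iff_isUnit.mpr (isUnit_of_mul_dotProduct_self_le hc hN) a
  refine (le_inv_mul_iff₀ hc).mp
    (dotProduct_self_le_of_eq_dotProduct (inv_nonneg.mpr hc.le) ?_
      ((le_inv_mul_iff₀ hc).mpr (hN b)))
  rw [dotProduct_comm _ b, Matrix.dotProduct_transpose_mulVec]

end DotProduct

section Frames

variable {k m : Type*} [Fintype k] [Fintype m]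

/-- The component of `x` orthogonal to the rows of `U`, when these are orthonormal
(`U * Uᵀ = 1`): it is then `x - P x`, with `P = Uᵀ * U` the orthogonal projection onto the
row space. -/
def orthResidual (U : Matrix k m ℝ) (x : m → ℝ) : m → ℝ := x - Uᵀ *ᵥ (U *ᵥ x)

lemma orthResidual_sub (U : Matrix k m ℝ) (x y : m → ℝ) :
    orthResidual U (x - y) = orthResidual U x - orthResidual U y := by
  simp only [orthResidual, Matrix.mulVec_sub]
  abel

variable [DecidableEq k] {U V : Matrix k m ℝ}

lemma mulVec_orthResidual (hU : U * Uᵀ = 1) (x : m → ℝ) : U *ᵥ orthResidual U x = 0 := by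
  rw [orthResidual, Matrix.mulVec_sub, Matrix.mulVec_mulVec, hU, Matrix.one_mulVec, sub_self]

lemma mulVec_transpose_mulVec (hU : U * Uᵀ = 1) (b : k → ℝ) : U *ᵥ (Uᵀ *ᵥ b) = b := by
  rw [Matrix.mulVec_mulVec, hU, Matrix.one_mulVec]

lemma transpose_mulVec_dotProduct_self (hU : U * Uᵀ = 1) (b : k → ℝ) :
    (Uᵀ *ᵥ b) ⬝ᵥ (Uᵀ *ᵥ b) = b ⬝ᵥ b := by
  rw [Matrix.dotProduct_transpose_mulVec, mulVec_transpose_mulVec hU]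

lemma dotProduct_mulVec_eq_sum_add_orthResidual {G : Matrix m m ℝ} (hG : G.IsHermitian)
    (hU : U * Uᵀ = 1) {lam : k → ℝ} (hGU : G * Uᵀ = Uᵀ * Matrix.diagonal lam) (x : m → ℝ) :
    x ⬝ᵥ (G *ᵥ x) =
      ∑ j, lam j * (U *ᵥ x) j ^ 2 + orthResidual U x ⬝ᵥ (G *ᵥ orthResidual U x) := by
  have hx : x = Uᵀ *ᵥ (U *ᵥ x) + orthResidual U x := by rw [orthResidual]; abel
  set b := U *ᵥ x
  set y := orthResidual U x
  have hUy : U *ᵥ y = 0 := mulVec_orthResidual hU x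
  have hGb : G *ᵥ (Uᵀ *ᵥ b) = Uᵀ *ᵥ (Matrix.diagonal lam *ᵥ b) := by
    rw [Matrix.mulVec_mulVec, hGU, ← Matrix.mulVec_mulVec]
  have hcross : y ⬝ᵥ (G *ᵥ (Uᵀ *ᵥ b)) = 0 := by
    rw [hGb, Matrix.dotProduct_transpose_mulVec, hUy, dotProduct_zero]
  have hcross' : (Uᵀ *ᵥ b) ⬝ᵥ (G *ᵥ y) = 0 := by
    rw [← hcross, ← Matrix.dotProduct_transpose_mulVec,
      ← Matrix.conjTranspose_eq_transpose_of_trivial, hG.eq]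
  have hdiag : (Uᵀ *ᵥ b) ⬝ᵥ (G *ᵥ (Uᵀ *ᵥ b)) = ∑ j, lam j * b j ^ 2 := by
    rw [hGb, Matrix.dotProduct_transpose_mulVec, mulVec_transpose_mulVec hU]
    simp only [dotProduct, Matrix.mulVec_diagonal, mul_assoc, sq]
  rw [hx, Matrix.mulVec_add, add_dotProduct, dotProduct_add, dotProduct_add, hcross, hcross', hdiag,
    add_zero, zero_add]

lemma dotProduct_self_eq_add_orthResidual (hU : U * Uᵀ = 1) (x : m → ℝ) :
    x ⬝ᵥ x = (U *ᵥ x) ⬝ᵥ (U *ᵥ x) + orthResidual U x ⬝ᵥ orthResidual U x := by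
  classical
  simpa [dotProduct_self_eq_sum_sq (U *ᵥ x)] using
    dotProduct_mulVec_eq_sum_add_orthResidual Matrix.isHermitian_one hU (lam := 1) (by simp) x

lemma mulVec_dotProduct_self_le (hU : U * Uᵀ = 1) (x : m → ℝ) :
    (U *ᵥ x) ⬝ᵥ (U *ᵥ x) ≤ x ⬝ᵥ x := by
  rw [dotProduct_self_eq_add_orthResidual hU x]
  exact le_add_of_nonneg_right (dotProduct_self_nonneg _)

lemma mul_dotProduct_self_le_mul_transpose_mulVec (hU : U * Uᵀ = 1) (hV : V * Vᵀ = 1) {θ : ℝ}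
    (hθ : 0 ≤ θ)
    (hUV : ∀ e, V *ᵥ e = 0 → (U *ᵥ e) ⬝ᵥ (U *ᵥ e) ≤ θ * (e ⬝ᵥ e)) (b : k → ℝ) :
    (1 - θ) * (b ⬝ᵥ b) ≤ ((V * Uᵀ) *ᵥ b) ⬝ᵥ ((V * Uᵀ) *ᵥ b) := by
  set y := Uᵀ *ᵥ b with hy
  set e := orthResidual V y
  have hVe : V *ᵥ e = 0 := mulVec_orthResidual hV y
  have hee : e ⬝ᵥ e = b ⬝ᵥ (U *ᵥ e) :=
    calc e ⬝ᵥ e = e ⬝ᵥ y - e ⬝ᵥ (Vᵀ *ᵥ (V *ᵥ y)) := by rw [← dotProduct_sub]; rfl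
      _ = b ⬝ᵥ (U *ᵥ e) := by
        rw [Matrix.dotProduct_transpose_mulVec V, hVe, dotProduct_zero, sub_zero, hy,
          Matrix.dotProduct_transpose_mulVec]
  have hsmall : e ⬝ᵥ e ≤ θ * (b ⬝ᵥ b) := dotProduct_self_le_of_eq_dotProduct hθ hee (hUV e hVe)
  have hpyth := dotProduct_self_eq_add_orthResidual hV y
  rw [← Matrix.mulVec_mulVec]
  linarith [transpose_mulVec_dotProduct_self hU b]

end Frames

section Spectrum

variable {k m : Type*} [Fintype k] [Fintype m] [DecidableEq k] [DecidableEq m]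
  {G : Matrix m m ℝ}

lemma exists_orthonormal_eigenframe (hG : G.IsHermitian) : ∃ W : Matrix m m ℝ,
    W * Wᵀ = 1 ∧ G * Wᵀ = Wᵀ * Matrix.diagonal hG.eigenvalues := by
  refine ⟨(hG.eigenvectorUnitary : Matrix m m ℝ)ᵀ, ?_, ?_⟩
  · simpa [Matrix.star_eq_conjTranspose] using Unitary.coe_star_mul_self hG.eigenvectorUnitary
  · ext i j
    rw [Matrix.transpose_transpose, Matrix.mul_diagonal, mul_comm]
    exact congrFun (hG.mulVec_eigenvectorBasis j) i

lemma finrank_le_card_le_eigenvalues (hG : G.IsHermitian) {t : ℝ} {E : Type*} [AddCommGroup E]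
    [Module ℝ E] (f : E →ₗ[ℝ] m → ℝ) (hf : Function.Injective f)
    (hq : ∀ x, t * (f x ⬝ᵥ f x) ≤ f x ⬝ᵥ (G *ᵥ f x)) :
    Module.finrank ℝ E ≤ (Finset.univ.filter fun i => t ≤ hG.eigenvalues i).card := by
  obtain ⟨W, hW, hGW⟩ := exists_orthonormal_eigenframe hG
  have hres (x : m → ℝ) : orthResidual W x = 0 := by
    rw [orthResidual, Matrix.mulVec_mulVec, mul_eq_one_comm.mp hW, Matrix.one_mulVec, sub_self]
  set I := Finset.univ.filter fun i => t ≤ hG.eigenvalues i with hI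
  let coords : E →ₗ[ℝ] I → ℝ := LinearMap.funLeft ℝ ℝ Subtype.val ∘ₗ W.toLin' ∘ₗ f
  suffices hinj : Function.Injective coords by
    simpa using LinearMap.finrank_le_finrank_of_injective hinj
  refine (injective_iff_map_eq_zero coords).mpr fun x hx => ?_
  set c := W *ᵥ f x with hc
  have hcI : ∀ i, t ≤ hG.eigenvalues i → c i = 0 := fun i hi =>
    congrFun hx ⟨i, by simpa [hI] using hi⟩
  have hterm : ∀ i ∈ Finset.univ, (hG.eigenvalues i - t) * c i ^ 2 ≤ 0 := fun i _ => by
    rcases le_or_gt t (hG.eigenvalues i) with hi | hi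
    · simp [hcI i hi]
    · exact mul_nonpos_of_nonpos_of_nonneg (sub_nonpos.mpr hi.le) (sq_nonneg _)
  have hsum : 0 ≤ ∑ i, (hG.eigenvalues i - t) * c i ^ 2 := by
    have h := hq x
    rw [dotProduct_mulVec_eq_sum_add_orthResidual hG hW hGW, dotProduct_self_eq_add_orthResidual hW,
      hres, dotProduct_self_eq_sum_sq] at h
    simpa [sub_mul, Finset.sum_sub_distrib, Finset.mul_sum] using h
  have hzero := (Finset.sum_eq_zero_iff_of_nonpos hterm).mp
    (le_antisymm (Finset.sum_nonpos hterm) hsum)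
  have hc0 : c = 0 := funext fun i => by
    rcases le_or_gt t (hG.eigenvalues i) with hi | hi
    · exact hcI i hi
    · simpa [(sub_neg.mpr hi).ne] using hzero i (Finset.mem_univ i)
  refine hf ?_
  rw [map_zero, sub_eq_zero.mp (hres (f x)), ← hc, hc0, Matrix.mulVec_zero]

lemma dotProduct_mulVec_le_of_mulVec_eq_zero (hG : G.IsHermitian) {U : Matrix k m ℝ}
    (hU : U * Uᵀ = 1) {lam : k → ℝ} (hGU : G * Uᵀ = Uᵀ * Matrix.diagonal lam) {t : ℝ}
    (hlam : ∀ j, t ≤ lam j)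
    (hcard : (Finset.univ.filter fun i => t ≤ hG.eigenvalues i).card ≤ Fintype.card k)
    {y : m → ℝ} (hy : U *ᵥ y = 0) : y ⬝ᵥ (G *ᵥ y) ≤ t * (y ⬝ᵥ y) := by
  -- The rows of `U` together with `y` would span a space of dimension `card k + 1` on which the
  -- energy is at least `t`.
  by_contra! hlt
  have hy0 : y ≠ 0 := by rintro rfl; simp at hlt
  let f : (k → ℝ) × ℝ →ₗ[ℝ] m → ℝ := Uᵀ.toLin'.coprod (LinearMap.toSpanSingleton ℝ _ y)
  have hUf (x) : U *ᵥ f x = x.1 := by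
    simp [f, Matrix.mulVec_add, Matrix.mulVec_smul, hy, hU]
  have hres (x) : orthResidual U (f x) = x.2 • y := by
    rw [orthResidual, hUf]; simp [f]
  have hinj : Function.Injective f := by
    refine (injective_iff_map_eq_zero f).mpr fun x hx => ?_
    have h1 := hUf x
    have h2 := hres x
    rw [hx, Matrix.mulVec_zero] at h1
    rw [hx, orthResidual, Matrix.mulVec_zero, Matrix.mulVec_zero, sub_zero] at h2
    exact Prod.ext h1.symm ((smul_eq_zero.mp h2.symm).resolve_right hy0)
  have hq (x) : t * (f x ⬝ᵥ f x) ≤ f x ⬝ᵥ (G *ᵥ f x) := by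
    rw [dotProduct_mulVec_eq_sum_add_orthResidual hG hU hGU, dotProduct_self_eq_add_orthResidual hU,
      hUf, hres]
    simp only [Matrix.mulVec_smul, smul_dotProduct, dotProduct_smul, smul_eq_mul]
    nlinarith [mul_dotProduct_self_le_sum hlam x.1,
      mul_le_mul_of_nonneg_left hlt.le (mul_self_nonneg x.2)]
  have hdim := (finrank_le_card_le_eigenvalues hG f hinj hq).trans hcard
  simp at hdim

end Spectrum

section EigenvalueOrder

lemma card_le_eigenvalues_eq_card_le_eigDesc {p : ℕ} {G : Matrix (Fin p) (Fin p) ℝ}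
    (hG : G.IsHermitian) (t : ℝ) :
    (Finset.univ.filter fun i => t ≤ hG.eigenvalues i).card =
      (Finset.univ.filter fun j => t ≤ eigDesc G j).card := by
  refine (Finset.card_equiv (Fin.revPerm.trans (Tuple.sort hG.eigenvalues)) fun i => ?_).symm
  simp only [eigDesc, dif_pos hG, Finset.mem_filter, Finset.mem_univ, true_and,
    Function.comp_apply, Equiv.trans_apply, Fin.revPerm_apply]

lemma antitone_eigDesc {p : ℕ} (G : Matrix (Fin p) (Fin p) ℝ) : Antitone (eigDesc G) := by
  unfold eigDesc
  split_ifs with hG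
  · exact fun i j hij => Tuple.monotone_sort hG.eigenvalues (Fin.rev_le_rev.mpr hij)
  · exact antitone_const

lemma le_of_lt_card_filter_le {α : Type*} [LinearOrder α] {p : ℕ} {f : Fin p → α}
    (hf : Antitone f) {t : α} {k : Fin p}
    (hk : (k : ℕ) < (Finset.univ.filter fun j => t ≤ f j).card) : t ≤ f k := by
  by_contra! hlt
  have hsub : (Finset.univ.filter fun j => t ≤ f j) ⊆ Finset.Iio k := fun j hj =>
    Finset.mem_Iio.mpr (lt_of_not_ge fun hkj =>
      ((Finset.mem_filter.mp hj).2.trans (hf hkj)).not_gt hlt)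
  exact hk.not_ge ((Finset.card_le_card hsub).trans_eq (Fin.card_Iio k))

lemma rEff_eq_card {p n : ℕ} (G : Matrix (Fin p) (Fin p) ℝ) {R : ℝ} (hR : 0 < R) (ε : ℝ) :
    rEff G R n ε =
      (Finset.univ.filter fun j => n * ε ^ 2 / (2 * R ^ 2) ≤ eigDesc G j).card := by
  have hiff (j) : n * ε ^ 2 / 2 ≤ eigDesc G j * R ^ 2 ↔ n * ε ^ 2 / (2 * R ^ 2) ≤ eigDesc G j := by
    rw [← div_div]
    exact (div_le_iff₀ (by positivity)).symm
  simp only [rEff, hiff]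

end EigenvalueOrder

section OperatorNorm

variable {k m : Type*} [Fintype k] [Fintype m]

lemma opNorm_nonneg (M : Matrix k m ℝ) : 0 ≤ opNorm M :=
  Real.sSup_nonneg fun _ ⟨_, _, ht⟩ => ht ▸ Real.sqrt_nonneg _

open scoped Matrix.Norms.L2Operator in
lemma opNorm_eq_l2_opNorm [DecidableEq m] (M : Matrix k m ℝ) : opNorm M = ‖M‖ := by
  rw [Matrix.l2_opNorm_def, ← ContinuousLinearMap.sSup_unitClosedBall_eq_norm, opNorm]
  congr 1
  ext t
  constructor
  · rintro ⟨x, hx, rfl⟩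
    refine ⟨WithLp.toLp 2 x, ?_, (EuclideanSpace.norm_eq _).trans ?_⟩
    · rwa [mem_closedBall_zero_iff, ← sq_le_one_iff₀ (norm_nonneg _),
        EuclideanSpace.real_norm_sq_eq]
    · simp
  · rintro ⟨x, hx, rfl⟩
    refine ⟨x.ofLp, ?_, (EuclideanSpace.norm_eq _).trans ?_⟩
    · rwa [mem_closedBall_zero_iff, ← sq_le_one_iff₀ (norm_nonneg _),
        EuclideanSpace.real_norm_sq_eq] at hx
    · simp

open scoped Matrix.Norms.L2Operator in
lemma mulVec_dotProduct_self_le_opNorm_sq (M : Matrix k m ℝ) (x : m → ℝ) :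
    (M *ᵥ x) ⬝ᵥ (M *ᵥ x) ≤ opNorm M ^ 2 * (x ⬝ᵥ x) := by
  classical
  rw [dotProduct_self_eq_norm_sq, dotProduct_self_eq_norm_sq, ← mul_pow, opNorm_eq_l2_opNorm]
  gcongr
  exact M.l2_opNorm_mulVec (WithLp.toLp 2 x)

variable [DecidableEq m]

lemma dotProduct_mulVec_eq_sqrt_mulVec_dotProduct_self {G : Matrix m m ℝ} (hG : G.PosSemidef)
    (y : m → ℝ) : y ⬝ᵥ (G *ᵥ y) = (CFC.sqrt G *ᵥ y) ⬝ᵥ (CFC.sqrt G *ᵥ y) := by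
  have hsymm : (CFC.sqrt G)ᵀ = CFC.sqrt G := by
    simpa using (Matrix.nonneg_iff_posSemidef.mp (CFC.sqrt_nonneg G)).isHermitian.eq
  conv_lhs => rw [← CFC.sqrt_mul_sqrt_self G hG.nonneg, ← Matrix.mulVec_mulVec]
  nth_rw 1 [← hsymm]
  rw [Matrix.dotProduct_transpose_mulVec]

lemma mulVec_dotProduct_mulVec_le_of_opNorm_sqrt_mul_le {G A : Matrix m m ℝ} (hG : G.PosSemidef)
    {c : ℝ} (hc : opNorm (CFC.sqrt G * A) ≤ c) (x : m → ℝ) :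
    (A *ᵥ x) ⬝ᵥ (G *ᵥ (A *ᵥ x)) ≤ c ^ 2 * (x ⬝ᵥ x) := by
  rw [dotProduct_mulVec_eq_sqrt_mulVec_dotProduct_self hG, Matrix.mulVec_mulVec]
  refine (mulVec_dotProduct_self_le_opNorm_sq _ x).trans ?_
  gcongr
  · exact dotProduct_self_nonneg x
  · exact opNorm_nonneg _

end OperatorNorm

section Volume

/-- The closed Euclidean ball of radius `|ρ|` centred at the origin, as a set of coordinate
vectors. The type `ι → ℝ` carries the sup norm, so this is not `Metric.closedBall 0 ρ`. -/
def euclBall (ι : Type*) [Fintype ι] (ρ : ℝ) : Set (ι → ℝ) := {a | ∑ i, a i ^ 2 ≤ ρ ^ 2}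

variable {ι : Type*} [Fintype ι] {ρ : ℝ}

lemma mem_euclBall {a : ι → ℝ} : a ∈ euclBall ι ρ ↔ a ⬝ᵥ a ≤ ρ ^ 2 := by
  rw [dotProduct_self_eq_sum_sq]; rfl

lemma euclBall_eq_preimage_closedBall (hρ : 0 ≤ ρ) :
    euclBall ι ρ = WithLp.toLp 2 ⁻¹' Metric.closedBall (0 : EuclideanSpace ℝ ι) ρ := by
  ext a
  rw [mem_euclBall, dotProduct_self_eq_norm_sq, Set.mem_preimage, mem_closedBall_zero_iff,
    sq_le_sq₀ (norm_nonneg _) hρ]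

lemma measurableSet_euclBall : MeasurableSet (euclBall ι ρ) :=
  measurableSet_le (by fun_prop) measurable_const

lemma volume_euclBall (hρ : 0 ≤ ρ) :
    volume (euclBall ι ρ) = volume (Metric.closedBall (0 : EuclideanSpace ℝ ι) ρ) := by
  rw [euclBall_eq_preimage_closedBall hρ, (PiLp.volume_preserving_toLp ι).measure_preimage
    Metric.isClosed_closedBall.measurableSet.nullMeasurableSet]

lemma volume_euclBall_ne_zero (hρ : 0 < ρ) : volume (euclBall ι ρ) ≠ 0 := by
  rw [volume_euclBall hρ.le]
  exact (Metric.measure_closedBall_pos volume 0 hρ).ne'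

lemma volume_euclBall_ne_top (hρ : 0 ≤ ρ) : volume (euclBall ι ρ) ≠ ⊤ := by
  rw [volume_euclBall hρ]
  exact measure_closedBall_lt_top.ne

lemma abs_linearMap_det_le_one_of_mapsTo {E : Type*} [NormedAddCommGroup E] [NormedSpace ℝ E]
    [FiniteDimensional ℝ E] [MeasurableSpace E] [BorelSpace E] (μ : Measure E)
    [μ.IsAddHaarMeasure] {f : E →ₗ[ℝ] E} {s : Set E} (hf : Set.MapsTo f s s) (h0 : μ s ≠ 0)
    (htop : μ s ≠ ⊤) : |LinearMap.det f| ≤ 1 := by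
  have h : ENNReal.ofReal |LinearMap.det f| * μ s ≤ 1 * μ s := by
    rw [one_mul, ← Measure.addHaar_image_linearMap]
    exact measure_mono hf.image_subset
  exact ENNReal.ofReal_le_one.mp ((ENNReal.mul_le_mul_iff_left h0 htop).mp h)

variable [DecidableEq ι]

lemma abs_det_le_one_of_mulVec_dotProduct_self_le {N : Matrix ι ι ℝ}
    (hN : ∀ a, (N *ᵥ a) ⬝ᵥ (N *ᵥ a) ≤ a ⬝ᵥ a) : |N.det| ≤ 1 := by
  rw [← LinearMap.det_toLin']
  refine abs_linearMap_det_le_one_of_mapsTo volume (s := euclBall ι 1) (fun a ha => ?_)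
    (volume_euclBall_ne_zero one_pos) (volume_euclBall_ne_top zero_le_one)
  exact mem_euclBall.mpr ((hN a).trans (mem_euclBall.mp ha))

open scoped Pointwise in
lemma volume_vadd_preimage_mulVec {L : Matrix ι ι ℝ} (hL : L.det ≠ 0) (c : ι → ℝ)
    (s : Set (ι → ℝ)) :
    volume (c +ᵥ L.mulVec ⁻¹' s) = ENNReal.ofReal |L.det|⁻¹ * volume s := by
  rw [measure_vadd, ← abs_inv, ← LinearMap.det_toLin']
  exact Measure.addHaar_preimage_linearMap volume (by rwa [LinearMap.det_toLin']) s

lemma log_abs_det_diagonal_sqrt_mul_le {d : ι → ℝ} (hd : ∀ i, 0 < d i) {N : Matrix ι ι ℝ}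
    (hN0 : N.det ≠ 0) (hN : |N.det| ≤ 1) :
    Real.log |(Matrix.diagonal (fun i => √(d i)) * N).det| ≤ 1 / 2 * ∑ i, Real.log (d i) := by
  have hne : ∀ i ∈ Finset.univ, √(d i) ≠ 0 := fun i _ => (Real.sqrt_pos.mpr (hd i)).ne'
  rw [Matrix.det_mul, Matrix.det_diagonal, Real.log_abs,
    Real.log_mul (Finset.prod_ne_zero_iff.mpr hne) hN0, Real.log_prod hne, Finset.mul_sum,
    ← Real.log_abs N.det]
  have hlog : ∀ i, Real.log √(d i) = 1 / 2 * Real.log (d i) := fun i => by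
    rw [Real.log_sqrt (hd i).le]; ring
  simp only [hlog]
  exact add_le_of_nonpos_right (Real.log_nonpos (abs_nonneg _) hN)

end Volume

section Prior

lemma negLog_le_ofReal_log {q : ℝ≥0∞} {d : ℝ} (hd : 0 < d) (hq : ENNReal.ofReal d⁻¹ ≤ q) :
    negLog q ≤ ENNReal.ofReal (Real.log d) := by
  have hq0 : q ≠ 0 := ((ENNReal.ofReal_pos.mpr (inv_pos.mpr hd)).trans_le hq).ne'
  rw [negLog, if_neg hq0]
  obtain rfl | htop := eq_or_ne q ⊤
  · simp
  have hle : d⁻¹ ≤ q.toReal := (ENNReal.ofReal_le_iff_le_toReal htop).mp hq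
  have hpos : 0 < q.toReal := (inv_pos.mpr hd).trans_le hle
  refine ENNReal.ofReal_le_ofReal (Real.log_le_log (one_div_pos.mpr hpos) ?_)
  rw [one_div]
  exact (inv_le_comm₀ hd hpos).mp hle

variable {p r : ℕ} {R : ℝ} {V : Matrix (Fin r) (Fin p) ℝ}

open scoped Pointwise in
lemma ofReal_inv_abs_det_le_refPrior (hR : 0 < R) {L : Matrix (Fin r) (Fin r) ℝ}
    (hL : L.det ≠ 0) (c : Fin r → ℝ) {S : Set (Fin p → ℝ)}
    (hS : ∀ z, L *ᵥ z ∈ euclBall (Fin r) (1.58 * R) →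
      c + z ∈ euclBall (Fin r) (1.58 * R) ∧ Vᵀ *ᵥ (c + z) ∈ S) :
    ENNReal.ofReal |L.det|⁻¹ ≤ refPrior p r R V.row S := by
  have hρ : 0 < 1.58 * R := by positivity
  set B := euclBall (Fin r) (1.58 * R)
  set embed : (Fin r → ℝ) → Fin p → ℝ := fun a i => ∑ k, a k * V k i with hembed
  have hembed_eq (a) : embed a = Vᵀ *ᵥ a := by
    ext i
    simp only [hembed, Matrix.mulVec, dotProduct, Matrix.transpose_apply, mul_comm]
  have hembed_meas : Measurable embed := by rw [hembed]; fun_prop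
  have hsub : c +ᵥ L.mulVec ⁻¹' B ⊆ embed ⁻¹' S ∩ B := by
    rintro _ ⟨z, hz, rfl⟩
    obtain ⟨hball, hmem⟩ := hS z hz
    exact ⟨by simpa [hembed_eq] using hmem, hball⟩
  calc ENNReal.ofReal |L.det|⁻¹
      = (volume B)⁻¹ * volume (c +ᵥ L.mulVec ⁻¹' B) := by
        rw [volume_vadd_preimage_mulVec hL, mul_left_comm, ENNReal.inv_mul_cancel
          (volume_euclBall_ne_zero hρ) (volume_euclBall_ne_top hρ.le), mul_one]
    _ ≤ (volume B)⁻¹ * volume (embed ⁻¹' S ∩ B) := by gcongr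
    _ = ((volume B)⁻¹ • volume.restrict B) (embed ⁻¹' S) := by
        rw [Measure.smul_apply, smul_eq_mul, Measure.restrict_apply' measurableSet_euclBall]
    _ ≤ refPrior p r R V.row S := Measure.le_map_apply hembed_meas.aemeasurable S

end Prior

/-- The rows of `U` are orthonormal eigenvectors of `G` with eigenvalues `lam`, all at least `τ`,
and `G` is at most `τ` orthogonally to them; the rows of `V` are orthonormal and span a reference
subspace that approximates the span of the rows of `U`. The distance of the two orthogonal
projections `Uᵀ * U` and `Vᵀ * V` is measured through `G^{1/2}`, whence the quadratic form of `G`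
in `energy_sub_le`. -/
structure IsReferenceFrame {k m : Type*} [Fintype k] [Fintype m] [DecidableEq k]
    (G : Matrix m m ℝ) (U V : Matrix k m ℝ) (lam : k → ℝ) (τ : ℝ) : Prop where
  pos : 0 < τ
  posSemidef : G.PosSemidef
  eigen_orthonormal : U * Uᵀ = 1
  ref_orthonormal : V * Vᵀ = 1
  mul_transpose : G * Uᵀ = Uᵀ * Matrix.diagonal lam
  le_eigenvalue : ∀ j, τ ≤ lam j
  energy_le : ∀ y, U *ᵥ y = 0 → y ⬝ᵥ (G *ᵥ y) ≤ τ * (y ⬝ᵥ y)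
  energy_sub_le : ∀ x, ((Uᵀ * U - Vᵀ * V) *ᵥ x) ⬝ᵥ (G *ᵥ ((Uᵀ * U - Vᵀ * V) *ᵥ x)) ≤
    τ / 8 * (x ⬝ᵥ x)

namespace IsReferenceFrame

variable {k m : Type*} [Fintype k] [Fintype m] [DecidableEq k]
  {G : Matrix m m ℝ} {U V : Matrix k m ℝ} {lam : k → ℝ} {τ : ℝ}

lemma energy_eq (h : IsReferenceFrame G U V lam τ) (x : m → ℝ) :
    x ⬝ᵥ (G *ᵥ x) =
      ∑ j, lam j * (U *ᵥ x) j ^ 2 + orthResidual U x ⬝ᵥ (G *ᵥ orthResidual U x) :=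
  dotProduct_mulVec_eq_sum_add_orthResidual h.posSemidef.isHermitian h.eigen_orthonormal
    h.mul_transpose x

lemma mul_mulVec_dotProduct_self_le_energy (h : IsReferenceFrame G U V lam τ) (x : m → ℝ) :
    τ * ((U *ᵥ x) ⬝ᵥ (U *ᵥ x)) ≤ x ⬝ᵥ (G *ᵥ x) := by
  rw [h.energy_eq]
  exact le_add_of_le_of_nonneg (mul_dotProduct_self_le_sum h.le_eigenvalue _)
    (by simpa using h.posSemidef.dotProduct_mulVec_nonneg (orthResidual U x))

lemma mulVec_dotProduct_self_le_of_ref_mulVec_eq_zero (h : IsReferenceFrame G U V lam τ)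
    {e : m → ℝ} (he : V *ᵥ e = 0) : (U *ᵥ e) ⬝ᵥ (U *ᵥ e) ≤ 1 / 8 * (e ⬝ᵥ e) := by
  have hdiff : (Uᵀ * U - Vᵀ * V) *ᵥ e = Uᵀ *ᵥ (U *ᵥ e) := by
    rw [Matrix.sub_mulVec, ← Matrix.mulVec_mulVec, ← Matrix.mulVec_mulVec, he, Matrix.mulVec_zero,
      sub_zero]
  have hlower := h.mul_mulVec_dotProduct_self_le_energy (Uᵀ *ᵥ (U *ᵥ e))
  rw [mulVec_transpose_mulVec h.eigen_orthonormal, ← hdiff] at hlower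
  refine le_of_mul_le_mul_left ?_ h.pos
  linarith [h.energy_sub_le e]

lemma mul_dotProduct_self_le_ref_mul_transpose_mulVec (h : IsReferenceFrame G U V lam τ)
    (b : k → ℝ) : 7 / 8 * (b ⬝ᵥ b) ≤ ((V * Uᵀ) *ᵥ b) ⬝ᵥ ((V * Uᵀ) *ᵥ b) := by
  have := mul_dotProduct_self_le_mul_transpose_mulVec h.eigen_orthonormal h.ref_orthonormal
    (by norm_num) (fun e => h.mulVec_dotProduct_self_le_of_ref_mulVec_eq_zero) b
  linarith

lemma mul_dotProduct_self_le_mulVec (h : IsReferenceFrame G U V lam τ) (a : k → ℝ) :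
    7 / 8 * (a ⬝ᵥ a) ≤ ((U * Vᵀ) *ᵥ a) ⬝ᵥ ((U * Vᵀ) *ᵥ a) := by
  simpa using mul_dotProduct_self_le_transpose_mulVec (by norm_num)
    h.mul_dotProduct_self_le_ref_mul_transpose_mulVec a

lemma isUnit_mul_transpose (h : IsReferenceFrame G U V lam τ) : IsUnit (U * Vᵀ) :=
  isUnit_of_mul_dotProduct_self_le (by norm_num) h.mul_dotProduct_self_le_mulVec

lemma abs_det_mul_transpose_le_one (h : IsReferenceFrame G U V lam τ) :
    |(U * Vᵀ).det| ≤ 1 := by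
  refine abs_det_le_one_of_mulVec_dotProduct_self_le fun a => ?_
  rw [← Matrix.mulVec_mulVec, ← transpose_mulVec_dotProduct_self h.ref_orthonormal a]
  exact mulVec_dotProduct_self_le h.eigen_orthonormal _

lemma energy_orthResidual_transpose_mulVec_le (h : IsReferenceFrame G U V lam τ) (a : k → ℝ) :
    orthResidual U (Vᵀ *ᵥ a) ⬝ᵥ (G *ᵥ orthResidual U (Vᵀ *ᵥ a)) ≤ τ / 8 * (a ⬝ᵥ a) := by
  have hdiff : (Uᵀ * U - Vᵀ * V) *ᵥ (Vᵀ *ᵥ a) = -orthResidual U (Vᵀ *ᵥ a) := by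
    rw [Matrix.sub_mulVec, ← Matrix.mulVec_mulVec, ← Matrix.mulVec_mulVec,
      mulVec_transpose_mulVec h.ref_orthonormal, orthResidual, neg_sub]
  have := h.energy_sub_le (Vᵀ *ᵥ a)
  rwa [hdiff, Matrix.mulVec_neg, neg_dotProduct_neg,
    transpose_mulVec_dotProduct_self h.ref_orthonormal] at this

lemma energy_orthResidual_le (h : IsReferenceFrame G U V lam τ) (w : m → ℝ) :
    orthResidual U w ⬝ᵥ (G *ᵥ orthResidual U w) ≤
      τ * (w ⬝ᵥ w - (U *ᵥ w) ⬝ᵥ (U *ᵥ w)) := by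
  rw [dotProduct_self_eq_add_orthResidual h.eigen_orthonormal w, add_sub_cancel_left]
  exact h.energy_le _ (mulVec_orthResidual h.eigen_orthonormal w)

variable {R : ℝ} {w : m → ℝ} {c z : k → ℝ}

lemma add_dotProduct_self_le (h : IsReferenceFrame G U V lam τ) (hc : (U * Vᵀ) *ᵥ c = U *ᵥ w)
    (hz : ∑ j, lam j * ((U * Vᵀ) *ᵥ z) j ^ 2 ≤ τ / 8 * R ^ 2) :
    (c + z) ⬝ᵥ (c + z) ≤ 12 / 7 * ((U *ᵥ w) ⬝ᵥ (U *ᵥ w)) + 3 / 7 * R ^ 2 := by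
  have hcenter := h.mul_dotProduct_self_le_mulVec c
  rw [hc] at hcenter
  have hshift : 7 / 8 * (z ⬝ᵥ z) ≤ R ^ 2 / 8 := by
    refine (h.mul_dotProduct_self_le_mulVec z).trans (le_of_mul_le_mul_left ?_ h.pos)
    linarith [mul_dotProduct_self_le_sum h.le_eigenvalue ((U * Vᵀ) *ᵥ z)]
  have := add_dotProduct_add_le (s := 1 / 2) (by norm_num) c z
  linarith

lemma add_mem_euclBall (h : IsReferenceFrame G U V lam τ) (hw : w ⬝ᵥ w ≤ R ^ 2)
    (hc : (U * Vᵀ) *ᵥ c = U *ᵥ w)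
    (hz : ∑ j, lam j * ((U * Vᵀ) *ᵥ z) j ^ 2 ≤ τ / 8 * R ^ 2) :
    c + z ∈ euclBall k (1.58 * R) := by
  rw [mem_euclBall, mul_pow]
  linarith [h.add_dotProduct_self_le hc hz, mulVec_dotProduct_self_le h.eigen_orthonormal w,
    sq_nonneg R]

lemma energy_sub_le_two_mul (h : IsReferenceFrame G U V lam τ) (hw : w ⬝ᵥ w ≤ R ^ 2)
    (hc : (U * Vᵀ) *ᵥ c = U *ᵥ w)
    (hz : ∑ j, lam j * ((U * Vᵀ) *ᵥ z) j ^ 2 ≤ τ / 8 * R ^ 2) :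
    (Vᵀ *ᵥ (c + z) - w) ⬝ᵥ (G *ᵥ (Vᵀ *ᵥ (c + z) - w)) ≤ 2 * τ * R ^ 2 := by
  set x := Vᵀ *ᵥ (c + z) with hx
  set β := (U *ᵥ w) ⬝ᵥ (U *ᵥ w)
  have hcoords : U *ᵥ (x - w) = (U * Vᵀ) *ᵥ z := by
    rw [Matrix.mulVec_sub, hx, Matrix.mulVec_mulVec, Matrix.mulVec_add, hc, add_sub_cancel_left]
  have hresidual : orthResidual U (x - w) ⬝ᵥ (G *ᵥ orthResidual U (x - w)) ≤
      3 * (τ / 8 * ((c + z) ⬝ᵥ (c + z))) + 3 / 2 * (τ * (w ⬝ᵥ w - β)) := by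
    have hyoung := add_dotProduct_mulVec_add_le h.posSemidef (s := 2) (by norm_num)
      (orthResidual U x) (-orthResidual U w)
    rw [← sub_eq_add_neg, ← orthResidual_sub, Matrix.mulVec_neg, neg_dotProduct_neg] at hyoung
    linarith [h.energy_orthResidual_transpose_mulVec_le (c + z), h.energy_orthResidual_le w]
  have hβ : 0 ≤ τ * β := mul_nonneg h.pos.le (dotProduct_self_nonneg _)
  have hsize := mul_le_mul_of_nonneg_left (h.add_dotProduct_self_le hc hz) h.pos.le
  have hwτ := mul_le_mul_of_nonneg_left hw h.pos.le
  have hRτ : 0 ≤ τ * R ^ 2 := mul_nonneg h.pos.le (sq_nonneg R)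
  rw [h.energy_eq, hcoords]
  linarith

lemma sum_le_of_mulVec_mem_euclBall (h : IsReferenceFrame G U V lam τ)
    (hz : (Matrix.diagonal (fun j => √(20 * lam j / τ)) * (U * Vᵀ)) *ᵥ z ∈
      euclBall k (1.58 * R)) :
    ∑ j, lam j * ((U * Vᵀ) *ᵥ z) j ^ 2 ≤ τ / 8 * R ^ 2 := by
  have hτ := h.pos
  have hlam (j) : 0 ≤ lam j := hτ.le.trans (h.le_eigenvalue j)
  have hsum : 20 / τ * ∑ j, lam j * ((U * Vᵀ) *ᵥ z) j ^ 2 ≤ (1.58 * R) ^ 2 := by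
    rw [Finset.mul_sum]
    refine Eq.trans_le (Finset.sum_congr rfl fun j _ => ?_) hz
    have := hlam j
    rw [← Matrix.mulVec_mulVec _ (Matrix.diagonal _), Matrix.mulVec_diagonal, mul_pow,
      Real.sq_sqrt (by positivity)]
    ring
  calc ∑ j, lam j * ((U * Vᵀ) *ᵥ z) j ^ 2
      = τ / 20 * (20 / τ * ∑ j, lam j * ((U * Vᵀ) *ᵥ z) j ^ 2) := by field_simp
    _ ≤ τ / 20 * (1.58 * R) ^ 2 := by gcongr
    -- `8 * 1.58 ^ 2 = 19.9712`, rounded up to the weight `20`.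
    _ ≤ τ / 8 * R ^ 2 := by nlinarith [mul_nonneg hτ.le (sq_nonneg R)]

theorem negLog_refPrior_le {p r : ℕ} {G : Matrix (Fin p) (Fin p) ℝ}
    {U V : Matrix (Fin r) (Fin p) ℝ} {lam : Fin r → ℝ} (h : IsReferenceFrame G U V lam τ)
    (hR : 0 < R) {w : Fin p → ℝ} (hw : w ⬝ᵥ w ≤ R ^ 2) :
    negLog (refPrior p r R V.row {w' | (w' - w) ⬝ᵥ (G *ᵥ (w' - w)) ≤ 2 * τ * R ^ 2}) ≤
      ENNReal.ofReal (1 / 2 * ∑ j, Real.log (20 * lam j / τ)) := by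
  have hweight (j) : 0 < 20 * lam j / τ :=
    div_pos (mul_pos (by norm_num) (h.pos.trans_le (h.le_eigenvalue j))) h.pos
  have hdet : (U * Vᵀ).det ≠ 0 :=
    ((Matrix.isUnit_iff_isUnit_det _).mp h.isUnit_mul_transpose).ne_zero
  set L := Matrix.diagonal (fun j => √(20 * lam j / τ)) * (U * Vᵀ) with hL
  have hLdet : L.det ≠ 0 := by
    rw [hL, Matrix.det_mul, Matrix.det_diagonal]
    exact mul_ne_zero
      (Finset.prod_ne_zero_iff.mpr fun j _ => (Real.sqrt_pos.mpr (hweight j)).ne') hdet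
  obtain ⟨c, hc⟩ := Matrix.mulVec_surjective_iff_isUnit.mpr h.isUnit_mul_transpose (U *ᵥ w)
  have hmass := ofReal_inv_abs_det_le_refPrior (V := V) hR hLdet c
    (S := {w' | (w' - w) ⬝ᵥ (G *ᵥ (w' - w)) ≤ 2 * τ * R ^ 2}) fun z hz =>
      have hz' := h.sum_le_of_mulVec_mem_euclBall hz
      ⟨h.add_mem_euclBall hw hc hz', h.energy_sub_le_two_mul hw hc hz'⟩
  exact (negLog_le_ofReal_log (abs_pos.mpr hLdet) hmass).trans (ENNReal.ofReal_le_ofReal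
    (log_abs_det_diagonal_sqrt_mul_le hweight hdet h.abs_det_mul_transpose_le_one))

end IsReferenceFrame

lemma of_mul_transpose_eq_one {k m : Type*} [Fintype m] [DecidableEq k] {u : k → m → ℝ}
    (hu : ∀ i j, u i ⬝ᵥ u j = if i = j then 1 else 0) : Matrix.of u * (Matrix.of u)ᵀ = 1 := by
  ext i j
  rw [Matrix.one_apply]
  exact hu i j

lemma mul_of_transpose_eq_transpose_mul_diagonal {k m : Type*} [Fintype k] [Fintype m]
    [DecidableEq k] {G : Matrix m m ℝ} {u : k → m → ℝ} {lam : k → ℝ}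
    (hu : ∀ j, G *ᵥ u j = lam j • u j) :
    G * (Matrix.of u)ᵀ = (Matrix.of u)ᵀ * Matrix.diagonal lam := by
  ext i j
  rw [Matrix.mul_diagonal, mul_comm]
  exact congrFun (hu j) i

lemma isReferenceFrame_of_eq_rEff {p n r : ℕ} (hn : 0 < n) (hrp : r ≤ p) {R ε : ℝ} (hR : 0 < R)
    (hε : 0 < ε) {G : Matrix (Fin p) (Fin p) ℝ} (hG : G.PosSemidef) {u v : Fin r → Fin p → ℝ}
    (hu : ∀ i j, u i ⬝ᵥ u j = if i = j then (1 : ℝ) else 0)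
    (hv : ∀ i j, v i ⬝ᵥ v j = if i = j then (1 : ℝ) else 0)
    (hr : r = rEff G R n ε)
    (hGu : ∀ j, G *ᵥ u j = eigDesc G (Fin.castLE hrp j) • u j)
    (huv : opNorm (CFC.sqrt G * (gramProj u - gramProj v)) ≤ √n * ε / (4 * R)) :
    IsReferenceFrame G (Matrix.of u) (Matrix.of v) (fun j => eigDesc G (Fin.castLE hrp j))
      (n * ε ^ 2 / (2 * R ^ 2)) := by
  have hU := of_mul_transpose_eq_one hu
  have hGU := mul_of_transpose_eq_transpose_mul_diagonal hGu
  rw [rEff_eq_card G hR] at hr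
  have hlam (j : Fin r) : n * ε ^ 2 / (2 * R ^ 2) ≤ eigDesc G (Fin.castLE hrp j) :=
    le_of_lt_card_filter_le (antitone_eigDesc G) (hr ▸ j.isLt)
  refine ⟨by positivity, hG, hU, of_mul_transpose_eq_one hv, hGU, hlam, fun y hy => ?_,
    fun x => ?_⟩
  · refine dotProduct_mulVec_le_of_mulVec_eq_zero hG.isHermitian hU hGU hlam ?_ hy
    rw [card_le_eigenvalues_eq_card_le_eigDesc, ← hr, Fintype.card_fin]
  · have hsq : (√n * ε / (4 * R)) ^ 2 = n * ε ^ 2 / (2 * R ^ 2) / 8 := by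
      rw [div_pow, mul_pow, Real.sq_sqrt n.cast_nonneg]
      ring
    exact hsq ▸ mulVec_dotProduct_mulVec_le_of_opNorm_sqrt_mul_le hG huv x

/-- **Pointwise Dimension via Reference Subspace (Lemma).** -/
theorem pointwise_dimension_via_reference_subspace
    (p n r : ℕ) (hp : 1 ≤ p) (hn : 1 ≤ n) (hr : 1 ≤ r) (hrp : r ≤ p)
    (R : ℝ) (hR : 0 < R)
    -- `V̄` is given by an orthonormal family `v` spanning it
    (v : Fin r → Fin p → ℝ)
    (hv : ∀ k l, (v k) ⬝ᵥ (v l) = if k = l then (1 : ℝ) else 0)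
    (G : Matrix (Fin p) (Fin p) ℝ) (hG : G.PosSemidef)
    (w : Fin p → ℝ) (hw : (∑ i, w i ^ 2) ≤ R ^ 2)
    (ε : ℝ) (hε : 0 < ε)
    -- (a) `r` is the effective rank of `G`
    (ha : r = rEff G R n ε)
    -- (b) some top-`r` eigenspace `V` of `G` is approximated by `V̄` to the required precision
    (hb : ∃ u : Fin r → Fin p → ℝ,
      (∀ k l, (u k) ⬝ᵥ (u l) = if k = l then (1 : ℝ) else 0) ∧
      (∀ k : Fin r, G.mulVec (u k) = eigDesc G (Fin.castLE hrp k) • u k) ∧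
      opNorm (CFC.sqrt G * (gramProj u - gramProj v)) ≤ Real.sqrt n * ε / (4 * R)) :
    negLog (refPrior p r R v {w' | (w' - w) ⬝ᵥ G.mulVec (w' - w) ≤ n * ε ^ 2}) ≤
      ENNReal.ofReal ((1 / 2) * ∑ k : Fin r,
        Real.log (40 * R ^ 2 * eigDesc G (Fin.castLE hrp k) / (n * ε ^ 2))) := by
  obtain ⟨u, hu, hGu, huv⟩ := hb
  have hframe := isReferenceFrame_of_eq_rEff hn hrp hR hε hG hu hv ha hGu huv
  have hradius : 2 * (n * ε ^ 2 / (2 * R ^ 2)) * R ^ 2 = n * ε ^ 2 := by field_simp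
  have hratio (x : ℝ) : 20 * x / (n * ε ^ 2 / (2 * R ^ 2)) = 40 * R ^ 2 * x / (n * ε ^ 2) := by
    field_simp
    ring
  have hbound := hframe.negLog_refPrior_le hR (by rwa [dotProduct_self_eq_sum_sq])
  simp only [hradius, hratio] at hbound
  exact hbound

end
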